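/- Let t ≥ 0 and κ ≥ t + 3 be integers and let η, ξ ∈ ℂ with |η| = r_κ and |ξ| ≤ r_{κ+1}·r_{t+1}. Then 1/|η − ξ|² ≤ 4·2^{2^{κ−1}}. -/

import Mathlib

noncomputable section

open Complex

/-- The open unit disc in ℂ. -/
def uD : Set ℂ := {z : ℂ | ‖z‖ < 1}

/-- Holomorphic on the unit disc. -/
def Holo (f : ℂ → ℂ) : Prop := DifferentiableOn ℂ f uD

/-- A weight on 𝔻: continuous and strictly positive. -/
def IsWeight (v : ℂ → ℝ) : Prop :=
  ContinuousOn v uD ∧ ∀ z ∈ uD, 0 < v z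

/-- Radial weight. -/
def Radial (v : ℂ → ℝ) : Prop :=
  ∀ z ∈ uD, ∀ w ∈ uD, ‖z‖ = ‖w‖ → v z = v w

/-- Non-increasing in the modulus. -/
def NonInc (v : ℂ → ℝ) : Prop :=
  ∀ z ∈ uD, ∀ w ∈ uD, ‖z‖ ≤ ‖w‖ → v w ≤ v z

/-- r₀ = 0, r_κ = 1 - 2^(-2^κ) for κ ≥ 1. -/
def rseq (κ : ℕ) : ℝ := if κ = 0 then 0 else 1 - 1 / 2 ^ (2 ^ κ)

/-- Condition (LOG 1) for a single radial weight. -/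
def Log1 (A : ℝ) (v : ℂ → ℝ) : Prop :=
  ∀ κ : ℕ, v (rseq κ : ℂ) ≤ A * v (rseq (κ + 1) : ℂ)

/-- Condition (LOG 2) for a single radial weight. -/
def Log2 (a : ℝ) (v : ℂ → ℝ) : Prop :=
  ∀ κ : ℕ, v (rseq (κ + 1) : ℂ) ≤ a * v (rseq κ : ℂ)

/-- The weight tends to 0 as |z| → 1. -/
def VanishAtOne (v : ℂ → ℝ) : Prop :=
  ∀ ε > 0, ∃ r : ℝ, r < 1 ∧ ∀ z ∈ uD, r ≤ ‖z‖ → v z ≤ ε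

/-- Associated growth function w~ of a growth condition w. -/
def growthTilde (w : ℂ → ℝ) (z : ℂ) : ℝ :=
  sSup {t : ℝ | ∃ g : ℂ → ℂ, Holo g ∧ (∀ x ∈ uD, ‖g x‖ ≤ w x) ∧ t = ‖g z‖}

/-- Associated weight ṽ = 1/(1/v)~. -/
def assocWeight (v : ℂ → ℝ) (z : ℂ) : ℝ := (growthTilde (fun x => 1 / v x) z)⁻¹

/-- Monotonicity of the double sequence: decreasing in n, increasing in N. -/
def MonoSeq (a : ℕ → ℕ → ℂ → ℝ) : Prop :=
  ∀ N n, ∀ z ∈ uD, a N (n + 1) z ≤ a N n z ∧ a N n z ≤ a (N + 1) n z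

/-- Condition (LOG) for a double sequence with constants 0 < a < 1 < A. -/
def SeqLOG (aa A : ℝ) (a : ℕ → ℕ → ℂ → ℝ) : Prop :=
  ∀ N n, Radial (a N n) ∧ NonInc (a N n) ∧ VanishAtOne (a N n) ∧
    Log1 A (a N n) ∧ Log2 aa (a N n)

/-- Condition (Q). -/
def CondQ (a : ℕ → ℕ → ℂ → ℝ) : Prop :=
  ∀ N, ∃ M ≥ N, ∃ n, ∀ K ≥ M, ∀ m, ∀ ε > 0, ∃ k, ∃ S > 0,
    ∀ z ∈ uD, 1 / a M m z ≤ max (ε / a N n z) (S / a K k z)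

/-- Condition (wQ). -/
def CondwQ (a : ℕ → ℕ → ℂ → ℝ) : Prop :=
  ∀ N, ∃ M ≥ N, ∃ n, ∀ K ≥ M, ∀ m, ∃ k, ∃ S > 0,
    ∀ z ∈ uD, 1 / a M m z ≤ max (S / a N n z) (S / a K k z)

/-- Condition (Q)~. -/
def CondQTilde (a : ℕ → ℕ → ℂ → ℝ) : Prop :=
  ∀ N, ∃ M ≥ N, ∃ n, ∀ K ≥ M, ∀ m, ∀ ε > 0, ∃ k, ∃ S > 0,
    ∀ z ∈ uD, growthTilde (fun x => 1 / a M m x) z ≤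
      growthTilde (fun x => max (ε / a N n x) (S / a K k x)) z

/-- Pointwise maximum max_{N=1,…,L} a_{N,n(N)}. -/
def finMax (a : ℕ → ℕ → ℂ → ℝ) (nn : ℕ → ℕ) (L : ℕ) (z : ℂ) : ℝ :=
  sSup {t : ℝ | ∃ N, 1 ≤ N ∧ N ≤ L ∧ t = a N (nn N) z}

/-- Condition (B). -/
def CondB (a : ℕ → ℕ → ℂ → ℝ) : Prop :=
  ∀ nn : ℕ → ℕ, ∃ m, ∀ M, ∃ L, 1 ≤ L ∧ ∃ c > 0,
    ∀ z ∈ uD, a M m z ≤ c * finMax a nn L z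

/-- Condition (B)~. -/
def CondBTilde (a : ℕ → ℕ → ℂ → ℝ) : Prop :=
  ∀ nn : ℕ → ℕ, ∃ m, ∀ M, ∃ L, 1 ≤ L ∧ ∃ c > 0,
    ∀ z ∈ uD, assocWeight (a M m) z ≤ c * assocWeight (finMax a nn L) z

/-- A weight is essential. -/
def Essential (v : ℂ → ℝ) : Prop :=
  ∃ C > 0, ∀ z ∈ uD,
    growthTilde (fun x => 1 / v x) z ≤ 1 / v z ∧
    1 / v z ≤ C * growthTilde (fun x => 1 / v x) z

/-- Condition (Σ). -/
def CondSigma (a : ℕ → ℕ → ℂ → ℝ) : Prop :=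
  ∀ N, ∃ K ≥ N, ∀ k, ∃ n ≥ k, ∀ ε > 0, ∃ Q : Set ℂ,
    IsCompact Q ∧ Q ⊆ uD ∧ ∀ z ∈ uD \ Q, a N n z / a K k z ≤ ε

/-- The Banach space Ha(𝔻) as a set of functions. -/
def HaSet (v : ℂ → ℝ) : Set (ℂ → ℂ) :=
  {f | Holo f ∧ ∃ C : ℝ, ∀ z ∈ uD, v z * ‖f z‖ ≤ C}

/-!
By the reverse triangle inequality `‖η - ξ‖` is at least the gap `r_κ - r_s`, where `s = t + 1`.
Since `1 - r_κ = 2 ^ (-2 ^ κ)` is at most half of `1 - r_s = 2 ^ (-2 ^ s)`, the gap is at least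
`2 ^ (-2 ^ s) / 2`, and squaring the reciprocal doubles the exponent `2 ^ s` to `2 ^ (s + 1)`.
-/

theorem rseq_of_ne_zero {κ : ℕ} (hκ : κ ≠ 0) : rseq κ = 1 - 1 / 2 ^ 2 ^ κ :=
  if_neg hκ

theorem rseq_le (κ : ℕ) : rseq κ ≤ 1 - 1 / 2 ^ 2 ^ κ := by
  rcases eq_or_ne κ 0 with rfl | hκ
  · norm_num [rseq]
  · exact (rseq_of_ne_zero hκ).le

theorem rseq_nonneg (κ : ℕ) : 0 ≤ rseq κ := by
  rcases eq_or_ne κ 0 with rfl | hκ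
  · exact (if_pos rfl).ge
  · rw [rseq_of_ne_zero hκ, sub_nonneg]
    exact div_le_one_of_le₀ (one_le_pow₀ one_le_two) (by positivity)

theorem rseq_le_one (κ : ℕ) : rseq κ ≤ 1 :=
  (rseq_le κ).trans (sub_le_self 1 (by positivity))

theorem one_div_two_mul_le_rseq_sub_rseq {s κ : ℕ} (h : s < κ) :
    1 / (2 * 2 ^ 2 ^ s) ≤ rseq κ - rseq s := by
  have exponent_lt : 2 ^ s < 2 ^ κ := Nat.pow_lt_pow_right one_lt_two h
  have two_mul_le : (2 : ℝ) * 2 ^ 2 ^ s ≤ 2 ^ 2 ^ κ := by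
    rw [← pow_succ']
    exact pow_le_pow_right₀ one_le_two exponent_lt
  calc
    (1 : ℝ) / (2 * 2 ^ 2 ^ s) = 1 / 2 ^ 2 ^ s - 1 / (2 * 2 ^ 2 ^ s) := by
      field_simp
      norm_num
    _ ≤ 1 / 2 ^ 2 ^ s - 1 / 2 ^ 2 ^ κ := by gcongr
    _ = (1 - 1 / 2 ^ 2 ^ κ) - (1 - 1 / 2 ^ 2 ^ s) := by ring
    _ ≤ rseq κ - rseq s :=
      sub_le_sub (rseq_of_ne_zero (Nat.ne_zero_of_lt h)).ge (rseq_le s)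

theorem cauchy_kernel_estimate_general {E : Type*} [SeminormedAddCommGroup E] {s κ : ℕ}
    (h : s < κ) {η ξ : E} (hη : rseq κ ≤ ‖η‖) (hξ : ‖ξ‖ ≤ rseq s) :
    1 / ‖η - ξ‖ ^ 2 ≤ 4 * 2 ^ 2 ^ (s + 1) := by
  have le_norm_sub : 1 / (2 * 2 ^ 2 ^ s) ≤ ‖η - ξ‖ :=
    calc
      1 / (2 * 2 ^ 2 ^ s) ≤ rseq κ - rseq s := one_div_two_mul_le_rseq_sub_rseq h
      _ ≤ ‖η‖ - ‖ξ‖ := sub_le_sub hη hξ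
      _ ≤ ‖η - ξ‖ := norm_sub_norm_le η ξ
  calc
    1 / ‖η - ξ‖ ^ 2 ≤ 1 / (1 / (2 * 2 ^ 2 ^ s)) ^ 2 := by gcongr
    _ = 4 * 2 ^ 2 ^ (s + 1) := by
      rw [pow_succ 2 s, pow_mul, one_div_pow, one_div_one_div, mul_pow]
      norm_num

/-- for |η| = r_κ and |ξ| ≤ r_{κ+1}·r_{t+1} with κ ≥ t + 3,
one has 1/|η − ξ|² ≤ 4·2^{2^{κ−1}}. -/
theorem cauchy_kernel_estimate (t κ : ℕ) (h : t + 3 ≤ κ) (η ξ : ℂ)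
    (hη : ‖η‖ = rseq κ)
    (hξ : ‖ξ‖ ≤ rseq (κ + 1) * rseq (t + 1)) :
    1 / ‖η - ξ‖ ^ 2 ≤ 4 * 2 ^ 2 ^ (κ - 1) := by
  have hξ' := hξ.trans (mul_le_of_le_one_left (rseq_nonneg _) (rseq_le_one _))
  exact (cauchy_kernel_estimate_general (by omega) hη.ge hξ').trans (by gcongr <;> grind)
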